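/- Under assumptions (I1)–(I4) and the additional assumption (I5) that there exist p > 2 and c_I > 0 with I(u) ≥ c_I ‖u‖_H^p for all u ∈ E, one has, for every λ ∈ (λ_n, λ_{n+1}), c_λ ≤ ((p−2)/(2 c_I^{2/(p−2)} p^{p/(p−2)})) · (λ_{n+1} − λ)^{p/(p−2)}. -/

import Mathlib

open Filter Topology Set
open scoped InnerProductSpace

/- Abstract setting: `E = D(A^{1/2})` is a real Hilbert space in which the rescaled
eigenfunctions `ζ_k / √(1+λ_k)` form a Hilbert basis (encoded by `hON` and `hdense` below);
the `H`-inner product of `u, v ∈ E` is recovered as `∑ₖ ⟨u,ζ_k⟩_H ⟨v,ζ_k⟩_H`, where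
`⟨u,ζ_k⟩_H = ⟨u,ζ_k⟩_E / (1+λ_k)`. -/

variable {E : Type*} [NormedAddCommGroup E] [InnerProductSpace ℝ E] [CompleteSpace E]

/-- The `H`-inner-product coefficient `⟨u, ζ_k⟩_H = ⟨u, ζ_k⟩_E / (1 + λ_k)`. -/
noncomputable def coefH (lam : ℕ → ℝ) (ζ : ℕ → E) (u : E) (k : ℕ) : ℝ :=
  ⟪u, ζ k⟫_ℝ / (1 + lam k)

/-- The square of the `H`-norm: `‖u‖_H² = ∑ₖ ⟨u,ζ_k⟩_H²`. -/
noncomputable def normHsq (lam : ℕ → ℝ) (ζ : ℕ → E) (u : E) : ℝ :=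
  ∑' k, (coefH lam ζ u k) ^ 2

/-- The symmetric bilinear form `q_λ(u,v) = ∑ₖ (λ_k − λ) ⟨u,ζ_k⟩_H ⟨v,ζ_k⟩_H`. -/
noncomputable def qForm (lam : ℕ → ℝ) (ζ : ℕ → E) (lambda : ℝ) (u v : E) : ℝ :=
  ∑' k, (lam k - lambda) * (coefH lam ζ u k * coefH lam ζ v k)

/-- The action functional `J_λ(u) = ½ q_λ(u) − I(u)`. -/
noncomputable def Jfun (lam : ℕ → ℝ) (ζ : ℕ → E) (I : E → ℝ) (lambda : ℝ) (u : E) : ℝ :=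
  qForm lam ζ lambda u u / 2 - I u

/-- `E_n`, the span of the eigenfunctions `ζ_0, …, ζ_n` (the first `n+1` of them). -/
noncomputable def Esub (ζ : ℕ → E) (n : ℕ) : Submodule ℝ E :=
  Submodule.span ℝ (ζ '' {k : ℕ | k ≤ n})

/-- `F_n(u) = E_n ⊕ ℝ u`. -/
noncomputable def Fsub (ζ : ℕ → E) (n : ℕ) (u : E) : Submodule ℝ E :=
  Esub ζ n ⊔ Submodule.span ℝ {u}

/-- `F_n(u)⁺ = E_n ⊕ ℝ⁺ u = {v + t u : v ∈ E_n, t > 0}`. -/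
def FsubPlus (ζ : ℕ → E) (n : ℕ) (u : E) : Set E :=
  {w | ∃ v ∈ Esub ζ n, ∃ t : ℝ, 0 < t ∧ w = v + t • u}

/-- The derivative of `J_λ` at `u` applied to `w`: `J_λ'(u)[w] = q_λ(u,w) − I'(u)[w]`. -/
noncomputable def Jderiv (lam : ℕ → ℝ) (ζ : ℕ → E) (I' : E → E →L[ℝ] ℝ)
    (lambda : ℝ) (u w : E) : ℝ :=
  qForm lam ζ lambda u w - I' u w

/-- The Nehari–Pankov set `NP_λ = {u ∈ E ∖ E_n : J_λ'(u)|_{F_n(u)} = 0}`. -/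
def NehariPankov (lam : ℕ → ℝ) (ζ : ℕ → E) (I' : E → E →L[ℝ] ℝ)
    (n : ℕ) (lambda : ℝ) : Set E :=
  {u | u ∉ Esub ζ n ∧ ∀ w ∈ Fsub ζ n u, Jderiv lam ζ I' lambda u w = 0}

/-- The ground-state level `c_λ = inf_{NP_λ} J_λ`. -/
noncomputable def clevel (lam : ℕ → ℝ) (ζ : ℕ → E) (I : E → ℝ) (I' : E → E →L[ℝ] ℝ)
    (n : ℕ) (lambda : ℝ) : ℝ :=
  sInf (Jfun lam ζ I lambda '' NehariPankov lam ζ I' n lambda)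

/-- The set `Q_λ` of minimizers of `J_λ` on `NP_λ`. -/
def Qset (lam : ℕ → ℝ) (ζ : ℕ → E) (I : E → ℝ) (I' : E → E →L[ℝ] ℝ)
    (n : ℕ) (lambda : ℝ) : Set E :=
  {u | u ∈ NehariPankov lam ζ I' n lambda ∧
    Jfun lam ζ I lambda u = clevel lam ζ I I' n lambda}

/-- `E_n^⊥ = {w ∈ E : ⟨w, ζ_k⟩_H = 0 for k = 0, …, n}`. -/
def EsubPerp (lam : ℕ → ℝ) (ζ : ℕ → E) (n : ℕ) : Set E :=
  {w | ∀ k ≤ n, coefH lam ζ w k = 0}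


lemma scalar_bound_aux (p c d r : ℝ) (hp : 2 < p) (hc : 0 < c) (hd : 0 < d) (hr : 0 ≤ r) :
    d * r ^ 2 / 2 - c * r ^ p ≤
      (p - 2) / (2 * c ^ (2 / (p - 2)) * p ^ (p / (p - 2))) * d ^ (p / (p - 2)) := by
  have hp2 : 0 < p - 2 := by linarith
  have hp0 : 0 < p := by linarith
  have hB : 0 < d / (c * p) := by positivity
  obtain ⟨m, hm⟩ : ∃ m : ℝ, m = (d / (c * p)) ^ (2 / (p - 2)) := ⟨_, rfl⟩
  have hm0 : 0 < m := by rw [hm]; positivity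
  have hmp : m ^ (p / 2) = m * (d / (c * p)) := by
    have h1 : p / 2 = 1 + (p - 2) / 2 := by ring
    rw [h1, Real.rpow_add hm0, Real.rpow_one]
    congr 1
    rw [hm, ← Real.rpow_mul hB.le]
    have : 2 / (p - 2) * ((p - 2) / 2) = 1 := by field_simp
    rw [this, Real.rpow_one]
  have hb := one_add_mul_self_le_rpow_one_add (s := r ^ 2 / m - 1) (p := p / 2)
    (by have : 0 ≤ r ^ 2 / m := by positivity
        linarith) (by linarith)
  have e1 : (1 : ℝ) + (r ^ 2 / m - 1) = r ^ 2 / m := by ring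
  rw [e1, Real.div_rpow (by positivity) hm0.le, hmp] at hb
  have e2 : (r ^ 2) ^ (p / 2) = r ^ p := by
    rw [← Real.rpow_natCast, ← Real.rpow_mul hr]
    congr 1
    push_cast
    ring
  rw [e2, le_div_iff₀ (by positivity)] at hb
  have e3 : (p - 2) / (2 * c ^ (2 / (p - 2)) * p ^ (p / (p - 2))) * d ^ (p / (p - 2))
      = m * d * (p - 2) / (2 * p) := by
    have h1 : p / (p - 2) = 1 + 2 / (p - 2) := by field_simp; ring
    rw [hm, h1, Real.rpow_add hd, Real.rpow_add hp0, Real.div_rpow hd.le (by positivity),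
      Real.mul_rpow hc.le hp0.le, Real.rpow_one, Real.rpow_one]
    have := Real.rpow_pos_of_pos hc (2 / (p - 2))
    have := Real.rpow_pos_of_pos hp0 (2 / (p - 2))
    field_simp
  rw [e3]
  have e4 : c * ((1 + p / 2 * (r ^ 2 / m - 1)) * (m * (d / (c * p))))
      = d * r ^ 2 / 2 - m * d * (p - 2) / (2 * p) := by
    field_simp
    ring
  have := mul_le_mul_of_nonneg_left hb hc.le
  linarith

lemma coercive_aux (p c d : ℝ) (hp : 2 < p) (hc : 0 < c) :
    ∃ R : ℝ, 0 < R ∧ ∀ r, R ≤ r → d * r ^ 2 / 2 - c * r ^ p ≤ 0 := by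
  have h := (tendsto_rpow_atTop (y := p - 2) (by linarith)).eventually_ge_atTop (d / 2 / c)
  obtain ⟨R, hR⟩ := eventually_atTop.1 h
  refine ⟨max R 1, by positivity, fun r hr => ?_⟩
  have hr0 : 0 < r := lt_of_lt_of_le one_pos ((le_max_right _ _).trans hr)
  have h1 := hR r ((le_max_left _ _).trans hr)
  have e : r ^ p = r ^ (p - 2) * r ^ 2 := by
    rw [← Real.rpow_natCast, ← Real.rpow_add hr0]
    congr 1
    push_cast
    ring
  rw [div_le_iff₀ hc] at h1
  rw [e]
  have := mul_le_mul_of_nonneg_right h1 (sq_nonneg r)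
  nlinarith

lemma coefH_sum_aux (lam : ℕ → ℝ) (ζ : ℕ → E) (hlam_nonneg : ∀ k, 0 ≤ lam k)
    (hON : ∀ j k, ⟪ζ j, ζ k⟫_ℝ = if j = k then 1 + lam k else 0) (N : ℕ)
    (x : Fin N → ℝ) (k : ℕ) :
    coefH lam ζ (∑ i : Fin N, x i • ζ i) k = if h : k < N then x ⟨k, h⟩ else 0 := by
  have hk : (1 + lam k) ≠ 0 := by have := hlam_nonneg k; positivity
  unfold coefH
  rw [sum_inner]
  simp_rw [real_inner_smul_left, hON]
  split_ifs with h
  · rw [Finset.sum_eq_single (⟨k, h⟩ : Fin N)]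
    · simp [hk]
    · intro b _ hb
      have : (b : ℕ) ≠ k := fun hh => hb (Fin.ext hh)
      simp [this]
    · simp
  · rw [Finset.sum_eq_zero, zero_div]
    intro b _
    have : (b : ℕ) ≠ k := fun hh => h (hh ▸ b.2)
    simp [this]

lemma tsum_fin_aux (N : ℕ) (f : ℕ → ℝ) (hf : ∀ k, N ≤ k → f k = 0) :
    ∑' k, f k = ∑ i : Fin N, f i := by
  rw [tsum_eq_sum (s := Finset.range N), Finset.sum_range]
  intro b hb
  exact hf b (by simpa using hb)

lemma qForm_sum_aux (lam : ℕ → ℝ) (ζ : ℕ → E) (hlam_nonneg : ∀ k, 0 ≤ lam k)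
    (hON : ∀ j k, ⟪ζ j, ζ k⟫_ℝ = if j = k then 1 + lam k else 0) (N : ℕ) (l : ℝ)
    (x y : Fin N → ℝ) :
    qForm lam ζ l (∑ i : Fin N, x i • ζ i) (∑ i : Fin N, y i • ζ i)
      = ∑ i : Fin N, (lam i - l) * (x i * y i) := by
  unfold qForm
  simp_rw [coefH_sum_aux lam ζ hlam_nonneg hON]
  rw [tsum_fin_aux N]
  · simp
  · intro k hk
    simp [not_lt.2 hk]

lemma normHsq_sum_aux (lam : ℕ → ℝ) (ζ : ℕ → E) (hlam_nonneg : ∀ k, 0 ≤ lam k)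
    (hON : ∀ j k, ⟪ζ j, ζ k⟫_ℝ = if j = k then 1 + lam k else 0) (N : ℕ)
    (x : Fin N → ℝ) :
    normHsq lam ζ (∑ i : Fin N, x i • ζ i) = ∑ i : Fin N, x i ^ 2 := by
  unfold normHsq
  simp_rw [coefH_sum_aux lam ζ hlam_nonneg hON]
  rw [tsum_fin_aux N]
  · simp
  · intro k hk
    simp [not_lt.2 hk]

lemma coefH_Esub_aux (lam : ℕ → ℝ) (ζ : ℕ → E)
    (hON : ∀ j k, ⟪ζ j, ζ k⟫_ℝ = if j = k then 1 + lam k else 0) (n : ℕ)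
    (u : E) (hu : u ∈ Esub ζ n) (k : ℕ) (hk : n < k) : coefH lam ζ u k = 0 := by
  have : ⟪u, ζ k⟫_ℝ = 0 := by
    unfold Esub at hu
    induction hu using Submodule.span_induction with
    | mem x hx =>
      obtain ⟨j, hj, rfl⟩ := hx
      have hj' : j ≤ n := hj
      rw [hON, if_neg (by omega)]
    | zero => simp
    | add x y _ _ hx hy => rw [inner_add_left, hx, hy, add_zero]
    | smul a x _ hx => rw [real_inner_smul_left, hx, mul_zero]
  rw [coefH, this, zero_div]

lemma Fsub_aux (ζ : ℕ → E) (n : ℕ) (x : Fin (n + 2) → ℝ) (w : E)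
    (hw : w ∈ Fsub ζ n (∑ i : Fin (n + 2), x i • ζ i)) :
    ∃ y : Fin (n + 2) → ℝ, w = ∑ i : Fin (n + 2), y i • ζ i := by
  have h1 : Fsub ζ n (∑ i : Fin (n + 2), x i • ζ i) ≤
      LinearMap.range (Fintype.linearCombination ℝ (fun i : Fin (n + 2) => ζ i)) := by
    unfold Fsub Esub
    refine sup_le (Submodule.span_le.2 ?_) (Submodule.span_le.2 ?_)
    · rintro _ ⟨k, hk, rfl⟩
      have hk' : k ≤ n := hk
      exact ⟨Pi.single ⟨k, by omega⟩ 1, by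
        simp [Fintype.linearCombination_apply_single]⟩
    · rintro _ rfl
      exact ⟨x, by simp [Fintype.linearCombination_apply]⟩
  obtain ⟨y, hy⟩ := h1 hw
  exact ⟨y, by rw [← hy, Fintype.linearCombination_apply]⟩

/-- Under the additional lower bound (I5), `I(u) ≥ c_I ‖u‖_H^p`, one has
`c_λ ≤ ((p−2) / (2 c_I^{2/(p−2)} p^{p/(p−2)})) (λ_{n+1} − λ)^{p/(p−2)}`. -/
theorem clevel_upper_bound_of_I5 {E : Type*} [NormedAddCommGroup E]
    [InnerProductSpace ℝ E] [CompleteSpace E]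
    (lam : ℕ → ℝ) (ζ : ℕ → E)
    (hlam_mono : Monotone lam) (hlam_nonneg : ∀ k, 0 ≤ lam k)
    (hlam_top : Tendsto lam atTop atTop)
    (hON : ∀ j k, ⟪ζ j, ζ k⟫_ℝ = if j = k then 1 + lam k else 0)
    (hdense : (Submodule.span ℝ (Set.range ζ)).topologicalClosure = ⊤)
    (I : E → ℝ) (I' : E → E →L[ℝ] ℝ)
    (hIderiv : ∀ u, HasFDerivAt I (I' u) u) (hIderiv_cont : Continuous I')
    (hI1 : ∀ (u : ℕ → E) (a : E),
      (∀ φ : E →L[ℝ] ℝ, Tendsto (fun j => φ (u j)) atTop (𝓝 (φ a))) →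
      Tendsto (fun j => I (u j)) atTop (𝓝 (I a)))
    (hI2 : I 0 = 0 ∧ ∀ u : E, u ≠ 0 → 0 < I u)
    (hI3mono : ∀ u : E, u ≠ 0 → MonotoneOn (fun t : ℝ => I (t • u) / t ^ 2) (Ioi 0))
    (hI3zero : ∀ u : E, u ≠ 0 → Tendsto (fun t : ℝ => I (t • u) / t ^ 2) (𝓝[>] 0) (𝓝 0))
    (hI3top : ∀ u : E, u ≠ 0 → Tendsto (fun t : ℝ => I (t • u) / t ^ 2) atTop atTop)
    (hI4 : ∀ u : E, u ≠ 0 → ∀ v : E, ∀ s : ℝ, -1 ≤ s →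
      I u - I ((1 + s) • u + v) + I' u ((s * (s / 2 + 1)) • u + (1 + s) • v) ≤ 0)
    (hI4strict : ∀ u : E, u ≠ 0 → ∀ s : ℝ, -1 ≤ s → s ≠ 0 →
      I u - I ((1 + s) • u) + I' u ((s * (s / 2 + 1)) • u) < 0)
    (n : ℕ)
    (hgap : lam n < lam (n + 1))
    (p cI : ℝ) (hp : 2 < p) (hcI : 0 < cI)
    (hI5 : ∀ u : E, cI * Real.sqrt (normHsq lam ζ u) ^ p ≤ I u) :
    ∀ lambda ∈ Ioo (lam n) (lam (n + 1)),
      clevel lam ζ I I' n lambda ≤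
        (p - 2) / (2 * cI ^ (2 / (p - 2)) * p ^ (p / (p - 2))) *
          (lam (n + 1) - lambda) ^ (p / (p - 2)) := by
  intro l hl
  obtain ⟨hl1, hl2⟩ := hl
  obtain ⟨d, hd⟩ : ∃ d, d = lam (n + 1) - l := ⟨_, rfl⟩
  have hd0 : 0 < d := by rw [hd]; linarith
  rw [← hd]
  let φ : EuclideanSpace ℝ (Fin (n + 2)) → E := fun x => ∑ i : Fin (n + 2), x i • ζ i
  have hφc : Continuous φ := by fun_prop
  have hIc : Continuous I := continuous_iff_continuousAt.2 fun u => (hIderiv u).continuousAt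
  have hq : ∀ x y, qForm lam ζ l (φ x) (φ y) = ∑ i : Fin (n + 2), (lam i - l) * (x i * y i) :=
    fun x y => qForm_sum_aux lam ζ hlam_nonneg hON (n + 2) l x y
  have hJ : ∀ x, Jfun lam ζ I l (φ x) =
      (∑ i : Fin (n + 2), (lam i - l) * (x i * x i)) / 2 - I (φ x) := fun x => by
    rw [Jfun, hq]
  have hJc : Continuous fun x => Jfun lam ζ I l (φ x) := by
    simp_rw [hJ]
    have := hIc.comp hφc
    simp only [Function.comp_def] at this
    fun_prop
  have hle : ∀ x : EuclideanSpace ℝ (Fin (n + 2)),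
      Jfun lam ζ I l (φ x) ≤ d * ‖x‖ ^ 2 / 2 - cI * ‖x‖ ^ p := by
    intro x
    have h5 := hI5 (φ x)
    have hn : normHsq lam ζ (φ x) = ‖x‖ ^ 2 := by
      rw [EuclideanSpace.real_norm_sq_eq]
      exact normHsq_sum_aux lam ζ hlam_nonneg hON (n + 2) x
    rw [hn, Real.sqrt_sq (norm_nonneg _)] at h5
    rw [hJ]
    have : ∑ i : Fin (n + 2), (lam i - l) * (x i * x i) ≤ d * ‖x‖ ^ 2 := by
      rw [EuclideanSpace.real_norm_sq_eq, Finset.mul_sum]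
      refine Finset.sum_le_sum fun i _ => ?_
      have hi : lam i ≤ lam (n + 1) := hlam_mono (by omega)
      have : lam i - l ≤ d := by rw [hd]; linarith
      nlinarith [mul_le_mul_of_nonneg_right this (mul_self_nonneg (x i))]
    linarith
  -- a point with positive energy
  have hpos : ∃ x, 0 < Jfun lam ζ I l (φ x) := by
    have hz : ζ (n + 1) ≠ 0 := by
      intro h
      have := hON (n + 1) (n + 1)
      rw [h] at this
      simp at this
      have := hlam_nonneg (n + 1)
      linarith
    have h1 := (hI3zero _ hz).eventually (gt_mem_nhds (show (0 : ℝ) < d / 2 by positivity))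
    obtain ⟨t, ht, ht0⟩ := (h1.and self_mem_nhdsWithin).exists
    have ht0' : (0 : ℝ) < t := ht0
    rw [div_lt_iff₀ (by positivity)] at ht
    refine ⟨EuclideanSpace.single (Fin.last (n + 1)) t, ?_⟩
    rw [hJ]
    have e1 : φ (EuclideanSpace.single (Fin.last (n + 1)) t) = t • ζ (n + 1) := by
      simp only [φ]
      rw [Finset.sum_eq_single (Fin.last (n + 1))]
      · simp
      · intro b _ hb
        simp [hb]
      · simp
    rw [e1, Finset.sum_eq_single (Fin.last (n + 1))]
    · simp only [PiLp.single_apply, if_true, Fin.val_last, ← hd]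
      nlinarith
    · intro b _ hb
      simp [hb]
    · simp
  obtain ⟨x₁, hx₁⟩ := hpos
  obtain ⟨R, hR, hRle⟩ := coercive_aux p cI d hp hcI
  have hx₁R : ‖x₁‖ ≤ R := by
    by_contra! h
    have := hle x₁
    have := hRle _ h.le
    linarith
  obtain ⟨x, -, hx⟩ := (isCompact_closedBall (0 : EuclideanSpace ℝ (Fin (n + 2))) R).exists_isMaxOn
    ⟨x₁, by simpa using hx₁R⟩ hJc.continuousOn
  have hxpos : 0 < Jfun lam ζ I l (φ x) := lt_of_lt_of_le hx₁ (hx (by simpa using hx₁R))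
  have hmax : ∀ y, Jfun lam ζ I l (φ y) ≤ Jfun lam ζ I l (φ x) := by
    intro y
    by_cases hy : ‖y‖ ≤ R
    · exact hx (by simpa using hy)
    · have := hle y
      have := hRle _ (not_le.1 hy).le
      linarith
  have hmem : φ x ∈ NehariPankov lam ζ I' n l := by
    refine ⟨fun hE => ?_, fun w hw => ?_⟩
    · have h0 := coefH_Esub_aux lam ζ hON n _ hE (n + 1) (by omega)
      have h1 := coefH_sum_aux lam ζ hlam_nonneg hON (n + 2) x (n + 1)
      have h2 : x (Fin.last (n + 1)) = 0 := by
        rw [dif_pos (by omega)] at h1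
        exact h1.symm.trans h0
      rw [hJ] at hxpos
      have hI0 : 0 ≤ I (φ x) := by
        by_cases h : φ x = 0
        · rw [h, hI2.1]
        · exact (hI2.2 _ h).le
      have : ∑ i : Fin (n + 2), (lam i - l) * (x i * x i) ≤ 0 := by
        refine Finset.sum_nonpos fun i _ => ?_
        by_cases hi : i = Fin.last (n + 1)
        · rw [hi, h2]; simp
        · have hi' : (i : ℕ) ≤ n := by
            have : (i : ℕ) ≠ n + 1 := fun h => hi (Fin.ext (by simpa using h))
            omega
          have := hlam_mono hi'
          exact mul_nonpos_of_nonpos_of_nonneg (by linarith) (mul_self_nonneg _)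
      linarith
    · obtain ⟨y', hy'⟩ := Fsub_aux ζ n x w hw
      obtain ⟨y, hy⟩ : ∃ y : EuclideanSpace ℝ (Fin (n + 2)), w = φ y :=
        ⟨WithLp.toLp 2 y', by simpa [φ] using hy'⟩
      have hlin : ∀ t : ℝ, φ (x + t • y) = φ x + t • w := by
        intro t
        rw [hy]
        simp only [φ, PiLp.add_apply, PiLp.smul_apply, add_smul, Finset.sum_add_distrib,
          Finset.smul_sum, smul_smul, smul_eq_mul]
      have hD : HasDerivAt (fun t : ℝ => Jfun lam ζ I l (φ (x + t • y)))
          (Jderiv lam ζ I' l (φ x) w) 0 := by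
        have hline : HasDerivAt (fun t : ℝ => φ x + t • w) w 0 := by
          simpa using ((hasDerivAt_id (0 : ℝ)).smul_const w).const_add (φ x)
        have hIl : HasDerivAt (fun t : ℝ => I (φ x + t • w)) (I' (φ x) w) 0 := by
          have h := hIderiv (φ x + (0 : ℝ) • w)
          have h2 := h.comp_hasDerivAt (0 : ℝ) hline
          simpa [Function.comp_def] using h2
        have hS : HasDerivAt (fun t : ℝ => ∑ i : Fin (n + 2),
            (lam i - l) * ((x i + t * y i) * (x i + t * y i)))
            (∑ i : Fin (n + 2), (lam i - l) * (2 * (x i * y i))) 0 := by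
          refine HasDerivAt.fun_sum fun i _ => ?_
          have h1 : HasDerivAt (fun t : ℝ => x i + t * y i) (y i) 0 := by
            simpa using ((hasDerivAt_id (0 : ℝ)).mul_const (y i)).const_add (x i)
          have h2 := (h1.mul h1).const_mul (lam i - l)
          refine HasDerivAt.congr_deriv h2 ?_
          ring
        have hfin := (hS.div_const 2).sub hIl
        have hfun : (fun t : ℝ => Jfun lam ζ I l (φ (x + t • y))) = fun t : ℝ =>
            (∑ i : Fin (n + 2), (lam i - l) * ((x i + t * y i) * (x i + t * y i))) / 2
              - I (φ x + t • w) := by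
          funext t
          rw [hJ, hlin]
          simp
        rw [hfun]
        refine HasDerivAt.congr_deriv hfin ?_
        symm
        rw [Jderiv]
        congr 1
        rw [hy, hq, Finset.sum_div]
        refine Finset.sum_congr rfl fun i _ => ?_
        ring
      refine IsLocalMax.hasDerivAt_eq_zero ?_ hD
      refine Filter.Eventually.of_forall fun t => ?_
      simpa using hmax (x + t • y)
  suffices hbdd : BddBelow (Jfun lam ζ I l '' NehariPankov lam ζ I' n l) by
    exact (csInf_le hbdd ⟨φ x, hmem, rfl⟩).trans
      ((hle x).trans (scalar_bound_aux p cI d ‖x‖ hp hcI hd0 (norm_nonneg _)))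
  refine ⟨0, ?_⟩
  rintro _ ⟨u, ⟨huE, hu⟩, rfl⟩
  have hu0 : u ≠ 0 := fun h => huE (h ▸ Submodule.zero_mem _)
  have h1 := hu u (Submodule.mem_sup_right (Submodule.mem_span_singleton_self u))
  have h2 := hI4 u hu0 0 (-1) le_rfl
  rw [Jderiv] at h1
  have h3 : ((-1 : ℝ) * (-1 / 2 + 1)) = -(1 / 2) := by norm_num
  rw [h3] at h2
  simp only [add_neg_cancel, zero_smul, smul_zero, add_zero, hI2.1, map_smul, smul_eq_mul] at h2
  rw [Jfun]
  linarith
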